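/- If the metric of a Kenmotsu manifold of dimension 2n+1 is a gradient almost *-Ricci soliton, then the Ricci tensor satisfies S(X,Z) = (ξ(f + λ) - 2n - 1)g(X,Z) + (1 - ξ(f + λ))η(X)η(Z), i.e., M is η-Einstein. -/

import Mathlib

/-- An abstract algebraic model of a `(2n+1)`-dimensional Kenmotsu manifold:
`C` plays the role of the ring of smooth functions on the manifold and vector
fields are modelled as `ℝ`-derivations of `C`.  A global orthonormal frame `e`
is included in order to express traces (Ricci tensor, scalar curvature). -/
structure KenmotsuManifold (n : ℕ) (C : Type*) [CommRing C] [Algebra ℝ C] where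
  /-- the Riemannian metric -/
  g : Derivation ℝ C C → Derivation ℝ C C → C
  /-- the structure `(1,1)`-tensor field -/
  φ : Derivation ℝ C C → Derivation ℝ C C
  /-- the Reeb (characteristic) vector field -/
  ξ : Derivation ℝ C C
  /-- the contact `1`-form -/
  η : Derivation ℝ C C → C
  /-- the Levi-Civita connection -/
  nabla : Derivation ℝ C C → Derivation ℝ C C → Derivation ℝ C C
  /-- a global orthonormal frame, used to take traces -/
  e : Fin (2 * n + 1) → Derivation ℝ C C
  g_symm : ∀ X Y, g X Y = g Y X
  g_add_left : ∀ X Y Z, g (X + Y) Z = g X Z + g Y Z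
  g_smul_left : ∀ (f : C) (X Y), g (f • X) Y = f * g X Y
  g_nondeg : ∀ X, (∀ Y, g X Y = 0) → X = 0
  g_frame : ∀ i j, g (e i) (e j) = if i = j then 1 else 0
  frame_span : ∀ X : Derivation ℝ C C, X = ∑ i, g X (e i) • e i
  phi_phi : ∀ X, φ (φ X) = -X + η X • ξ
  phi_linear : ∀ (f : C) (X Y), φ (f • X + Y) = f • φ X + φ Y
  eta_xi : η ξ = 1
  eta_def : ∀ X, η X = g X ξ
  compat_phi : ∀ X Y, g (φ X) (φ Y) = g X Y - η X * η Y
  nabla_add_left : ∀ X Y Z, nabla (X + Y) Z = nabla X Z + nabla Y Z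
  nabla_smul_left : ∀ (f : C) (X Y), nabla (f • X) Y = f • nabla X Y
  nabla_add_right : ∀ X Y Z, nabla X (Y + Z) = nabla X Y + nabla X Z
  nabla_leibniz : ∀ (X) (f : C) (Y), nabla X (f • Y) = X f • Y + f • nabla X Y
  torsion_free : ∀ X Y, nabla X Y - nabla Y X = ⁅X, Y⁆
  metric_compat : ∀ X Y Z, X (g Y Z) = g (nabla X Y) Z + g Y (nabla X Z)
  /-- the Kenmotsu condition `(∇_X φ)Y = g(φX,Y)ξ - η(Y)φX` -/
  kenmotsu : ∀ X Y, nabla X (φ Y) - φ (nabla X Y) = g (φ X) Y • ξ - η Y • φ X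

namespace KenmotsuManifold

variable {n : ℕ} {C : Type*} [CommRing C] [Algebra ℝ C] (K : KenmotsuManifold n C)

/-- the Riemann curvature tensor `R(X,Y)Z = ∇_X∇_Y Z - ∇_Y∇_X Z - ∇_{[X,Y]}Z` -/
def Rm (X Y Z : Derivation ℝ C C) : Derivation ℝ C C :=
  K.nabla X (K.nabla Y Z) - K.nabla Y (K.nabla X Z) - K.nabla ⁅X, Y⁆ Z

/-- the Ricci tensor `S(X,Y) = trace (Z ↦ R(Z,X)Y)` -/
def S (X Y : Derivation ℝ C C) : C := ∑ i, K.g (K.Rm (K.e i) X Y) (K.e i)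

/-- the Ricci operator `Q`, `g(QX,Y) = S(X,Y)` -/
def Q (X : Derivation ℝ C C) : Derivation ℝ C C := ∑ i, K.S X (K.e i) • K.e i

/-- the scalar curvature `r` -/
def r : C := ∑ i, K.S (K.e i) (K.e i)

/-- the `*`-Ricci tensor `S*(X,Y) = (1/2) trace (Z ↦ R(X,φY)φZ)` -/
noncomputable def Sstar (X Y : Derivation ℝ C C) : C :=
  (2 : ℝ)⁻¹ • ∑ i, K.g (K.Rm X (K.φ Y) (K.φ (K.e i))) (K.e i)

/-- the covariant derivative `(∇_X Q)Y` of the Ricci operator -/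
def nablaQ (X Y : Derivation ℝ C C) : Derivation ℝ C C :=
  K.nabla X (K.Q Y) - K.Q (K.nabla X Y)

/-- the Lie derivative `(£_V g)(X,Y)` of the metric -/
def lieG (V X Y : Derivation ℝ C C) : C :=
  V (K.g X Y) - K.g ⁅V, X⁆ Y - K.g X ⁅V, Y⁆

/-- the Lie derivative `(£_V S)(X,Y)` of the Ricci tensor -/
def lieS (V X Y : Derivation ℝ C C) : C :=
  V (K.S X Y) - K.S ⁅V, X⁆ Y - K.S X ⁅V, Y⁆

/-- `g` is a `*`-Ricci soliton with potential vector field `V` and soliton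
constant `l`: `£_V g + 2S* + 2l g = 0`. -/
def IsStarRicciSoliton (V : Derivation ℝ C C) (l : ℝ) : Prop :=
  ∀ X Y, K.lieG V X Y + 2 * K.Sstar X Y + (2 * l) • K.g X Y = 0

/-- `g` is a gradient almost `*`-Ricci soliton with potential function `f`
(with gradient `F`, i.e. `g(F,X) = Xf`) and soliton function `l`:
`Hess f + S* + l g = 0`. -/
def IsGradAlmostStarRicciSoliton (f : C) (F : Derivation ℝ C C) (l : C) : Prop :=
  (∀ X, K.g F X = X f) ∧ ∀ X Y, K.g (K.nabla X F) Y + K.Sstar X Y + l * K.g X Y = 0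

/-- `M` is `η`-Einstein: `S = α g + β η⊗η`. -/
def IsEtaEinstein : Prop :=
  ∃ α β : C, ∀ X Y, K.S X Y = α * K.g X Y + β * (K.η X * K.η Y)

end KenmotsuManifold

/-!
Kenmotsu's condition forces `∇_X ξ = X - η(X) ξ`, hence `R(ξ, X)Y = η(Y) X - g(X, Y) ξ` and
`Q ξ = -2n ξ`. Contracting the second Bianchi identity then gives `(∇_ξ Q)X = -2 Q X - 4n X`, while
the Ricci identity for `φ` gives `S* = S + (2n - 1) g + η ⊗ η`. For a gradient soliton the latter
expresses `∇F` through `Q`, hence `R(X, Y)F` through `∇Q`. At `X = ξ` both `∇_ξ Q` and `R(ξ, Y)F`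
are known, which determines `Q Y` up to the term `Y(f + λ) ξ`. That term is recovered from
`η(Q Y) = -2n η(Y)`.
-/

theorem eq_zero_of_natCast_mul_eq_zero (k : Type*) {A : Type*} [Field k] [CharZero k] [CommRing A]
    [Algebra k A] {m : ℕ} (hm : m ≠ 0) {a : A} (h : (m : A) * a = 0) : a = 0 := by
  rw [← nsmul_eq_mul, ← Nat.cast_smul_eq_nsmul k] at h
  simpa [hm] using h

namespace KenmotsuManifold

variable {n : ℕ} {C : Type*} [CommRing C] [Algebra ℝ C] (K : KenmotsuManifold n C)
  (X Y Z W : Derivation ℝ C C)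

section Linearity

theorem g_add_right : K.g X (Y + Z) = K.g X Y + K.g X Z := by
  simp only [K.g_symm X, K.g_add_left]

theorem g_smul_right (a : C) : K.g X (a • Y) = a * K.g X Y := by
  simp only [K.g_symm X, K.g_smul_left]

/-- The metric `g` as a bundled `C`-bilinear form, which gives access to the linear algebra
library. -/
def metricForm : LinearMap.BilinForm C (Derivation ℝ C C) :=
  LinearMap.mk₂ C K.g K.g_add_left K.g_smul_left K.g_add_right fun a X Y => K.g_smul_right X Y a

theorem g_zero_left : K.g 0 X = 0 := K.metricForm.map_zero₂ X

theorem g_neg_left : K.g (-X) Y = -K.g X Y := K.metricForm.map_neg₂ X Y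

theorem g_sub_left : K.g (X - Y) Z = K.g X Z - K.g Y Z := K.metricForm.map_sub₂ X Y Z

theorem g_sub_right : K.g X (Y - Z) = K.g X Y - K.g X Z := map_sub (K.metricForm X) Y Z

theorem g_sum_left {ι : Type*} (s : Finset ι) (v : ι → Derivation ℝ C C) :
    K.g (∑ i ∈ s, v i) X = ∑ i ∈ s, K.g (v i) X :=
  K.metricForm.map_sum₂ s v X

variable {X Y} in
theorem g_ext (h : ∀ Z, K.g X Z = K.g Y Z) : X = Y :=
  sub_eq_zero.1 <| K.g_nondeg _ fun Z => by rw [K.g_sub_left, h, sub_self]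

theorem g_xi_left : K.g K.ξ X = K.η X := by rw [K.g_symm, K.eta_def]

theorem g_xi_right : K.g X K.ξ = K.η X := (K.eta_def X).symm

theorem eta_add : K.η (X + Y) = K.η X + K.η Y := by simp only [K.eta_def, K.g_add_left]

theorem eta_sub : K.η (X - Y) = K.η X - K.η Y := by simp only [K.eta_def, K.g_sub_left]

theorem eta_smul (a : C) : K.η (a • X) = a * K.η X := by simp only [K.eta_def, K.g_smul_left]

theorem phi_add : K.φ (X + Y) = K.φ X + K.φ Y := by simpa using K.phi_linear 1 X Y

theorem phi_zero : K.φ 0 = 0 := by simpa using K.phi_add 0 0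

theorem phi_smul (a : C) : K.φ (a • X) = a • K.φ X := by
  simpa [K.phi_zero] using K.phi_linear a X 0

theorem phi_neg : K.φ (-X) = -K.φ X := by simpa using K.phi_smul X (-1)

theorem phi_sub : K.φ (X - Y) = K.φ X - K.φ Y := by
  simp only [sub_eq_add_neg, K.phi_add, K.phi_neg]

theorem nabla_neg_left : K.nabla (-X) Y = -K.nabla X Y := by
  simpa using K.nabla_smul_left (-1) X Y

theorem nabla_sub_left : K.nabla (X - Y) Z = K.nabla X Z - K.nabla Y Z := by
  simp only [sub_eq_add_neg, K.nabla_add_left, K.nabla_neg_left]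

theorem nabla_neg_right : K.nabla X (-Y) = -K.nabla X Y := by
  simpa using K.nabla_leibniz X (-1) Y

theorem nabla_sub_right : K.nabla X (Y - Z) = K.nabla X Y - K.nabla X Z := by
  simp only [sub_eq_add_neg, K.nabla_add_right, K.nabla_neg_right]

end Linearity

section Frame

theorem sum_g_frame_smul_map {M : Type*} [AddCommGroup M] [Module C M]
    (L : Derivation ℝ C C →ₗ[C] M) : ∑ i, K.g X (K.e i) • L (K.e i) = L X := by
  conv_rhs => rw [K.frame_span X, map_sum]
  simp only [map_smul]

theorem sum_g_frame_mul_g_frame : ∑ i, K.g X (K.e i) * K.g (K.e i) Y = K.g X Y :=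
  K.sum_g_frame_smul_map X (K.metricForm.flip Y)

theorem sum_g_frame_frame : ∑ i, K.g (K.e i) (K.e i) = 2 * (n : C) + 1 := by
  simp [K.g_frame]

theorem sum_bilin_skew_frame (B : LinearMap.BilinForm C (Derivation ℝ C C))
    {b : Fin (2 * n + 1) → Derivation ℝ C C}
    (hb : ∀ i j, K.g (b i) (K.e j) = -K.g (K.e i) (b j)) :
    ∑ i, B (b i) (K.e i) = -∑ i, B (K.e i) (b i) := by
  have expand_left (i) : B (b i) (K.e i) = ∑ j, K.g (b i) (K.e j) * B (K.e j) (K.e i) :=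
    (K.sum_g_frame_smul_map (b i) (B.flip (K.e i))).symm
  have expand_right (i) : B (K.e i) (b i) = ∑ j, K.g (b i) (K.e j) * B (K.e i) (K.e j) :=
    (K.sum_g_frame_smul_map (b i) (B (K.e i))).symm
  simp only [expand_left, expand_right]
  rw [Finset.sum_comm, ← Finset.sum_neg_distrib]
  refine Finset.sum_congr rfl fun i _ => ?_
  rw [← Finset.sum_neg_distrib]
  exact Finset.sum_congr rfl fun j _ => by rw [hb, K.g_symm, neg_mul]

end Frame

section Curvature

theorem Rm_eq_nabla : K.Rm X Y Z =
    K.nabla X (K.nabla Y Z) - K.nabla Y (K.nabla X Z)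
      - (K.nabla (K.nabla X Y) Z - K.nabla (K.nabla Y X) Z) := by
  rw [Rm, ← K.torsion_free, K.nabla_sub_left]

theorem Rm_swap : K.Rm X Y Z = -K.Rm Y X Z := by
  simp only [Rm_eq_nabla]
  abel

theorem Rm_add_left : K.Rm (X + Y) Z W = K.Rm X Z W + K.Rm Y Z W := by
  simp only [Rm_eq_nabla, K.nabla_add_left, K.nabla_add_right]
  abel

theorem Rm_smul_left (a : C) : K.Rm (a • X) Y Z = a • K.Rm X Y Z := by
  simp only [Rm_eq_nabla, K.nabla_smul_left, K.nabla_leibniz, K.nabla_add_left]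
  module

theorem Rm_sub_left : K.Rm (X - Y) Z W = K.Rm X Z W - K.Rm Y Z W := by
  rw [sub_eq_add_neg, ← neg_one_smul C Y, K.Rm_add_left, K.Rm_smul_left, neg_one_smul,
    ← sub_eq_add_neg]

theorem Rm_add_mid : K.Rm X (Y + Z) W = K.Rm X Y W + K.Rm X Z W := by
  simp only [K.Rm_swap X, K.Rm_add_left, neg_add]

theorem Rm_smul_mid (a : C) : K.Rm X (a • Y) Z = a • K.Rm X Y Z := by
  simp only [K.Rm_swap X, K.Rm_smul_left, smul_neg]

theorem Rm_self : K.Rm X X Y = 0 := by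
  rw [Rm_eq_nabla, sub_self, sub_self, sub_self]

theorem g_Rm_skew : K.g (K.Rm X Y Z) W = -K.g (K.Rm X Y W) Z := by
  have hcomm : (K.nabla X Y) (K.g Z W) - (K.nabla Y X) (K.g Z W)
      = X (Y (K.g Z W)) - Y (X (K.g Z W)) := by
    rw [← Derivation.commutator_apply, ← K.torsion_free, Derivation.sub_apply]
  simp only [K.metric_compat, map_add] at hcomm
  simp only [Rm_eq_nabla, K.g_sub_left, K.g_symm _ Z]
  linear_combination -hcomm

theorem first_bianchi : K.Rm X Y Z + K.Rm Y Z X + K.Rm Z X Y = 0 := by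
  have jacobi := lie_jacobi X Y Z
  simp only [← K.torsion_free, K.nabla_sub_left, K.nabla_sub_right] at jacobi
  simp only [Rm_eq_nabla]
  rw [← jacobi]
  abel

theorem g_first_bianchi :
    K.g (K.Rm X Y Z) W + K.g (K.Rm Y Z X) W + K.g (K.Rm Z X Y) W = 0 := by
  rw [← K.g_add_left, ← K.g_add_left, K.first_bianchi, K.g_zero_left]

theorem g_Rm_pair_symm : K.g (K.Rm X Y Z) W = K.g (K.Rm Z W X) Y := by
  have swap (X Y Z W) : K.g (K.Rm X Y Z) W = -K.g (K.Rm Y X Z) W := by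
    rw [K.Rm_swap, K.g_neg_left]
  have hdouble : ((2 : ℕ) : C) * (K.g (K.Rm X Y Z) W - K.g (K.Rm Z W X) Y) = 0 := by
    have b₁ := K.g_first_bianchi X Y Z W
    have b₂ := K.g_first_bianchi Y Z W X
    have b₃ := K.g_first_bianchi Z W X Y
    have b₄ := K.g_first_bianchi W X Y Z
    rw [K.g_Rm_skew Y Z W X, K.g_Rm_skew Z W Y X, swap W Y Z X, K.g_Rm_skew Y W Z X] at b₂
    rw [K.g_Rm_skew W X Z Y, swap X Z W Y, K.g_Rm_skew Z X W Y] at b₃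
    rw [K.g_Rm_skew X Y W Z] at b₄
    push_cast
    linear_combination b₁ + b₂ - b₃ - b₄
  exact sub_eq_zero.1 (eq_zero_of_natCast_mul_eq_zero ℝ two_ne_zero hdouble)

/-- The covariant derivative `(∇_X R)(Y, Z)W` of the curvature tensor. -/
def nablaRm : Derivation ℝ C C :=
  K.nabla X (K.Rm Y Z W) - K.Rm (K.nabla X Y) Z W - K.Rm Y (K.nabla X Z) W
    - K.Rm Y Z (K.nabla X W)

theorem nablaRm_swap : K.nablaRm X Y Z W = -K.nablaRm X Z Y W := by
  simp only [nablaRm, K.Rm_swap Y, K.Rm_swap (K.nabla X Y), K.nabla_neg_right]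
  abel

theorem second_bianchi :
    K.nablaRm X Y Z W + K.nablaRm Y Z X W + K.nablaRm Z X Y W = 0 := by
  have jacobi := congrArg (K.nabla · W) (lie_jacobi X Y Z)
  have hzero : K.nabla 0 W = 0 := by simpa using K.nabla_smul_left 0 0 W
  simp only [← K.torsion_free, K.nabla_sub_left, K.nabla_sub_right, K.nabla_add_left, hzero]
    at jacobi
  simp only [nablaRm, Rm_eq_nabla, K.nabla_sub_right]
  rw [← neg_eq_zero, ← jacobi]
  abel

end Curvature

section Ricci

/-- The bilinear form `(V, W) ↦ g(R(V, X)Y, W)`, whose trace is the Ricci tensor `S(X, Y)`. -/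
def curvatureForm (X Y : Derivation ℝ C C) : LinearMap.BilinForm C (Derivation ℝ C C) :=
  LinearMap.mk₂ C (fun V W => K.g (K.Rm V X Y) W)
    (fun V V' W => by rw [K.Rm_add_left, K.g_add_left])
    (fun a V W => by rw [K.Rm_smul_left, K.g_smul_left, smul_eq_mul])
    (fun V W W' => K.g_add_right _ W W')
    (fun a V W => K.g_smul_right _ W a)

theorem S_symm : K.S X Y = K.S Y X :=
  Finset.sum_congr rfl fun i _ => by
    rw [K.g_Rm_pair_symm, K.Rm_swap, K.g_neg_left, K.g_Rm_skew, neg_neg]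

theorem S_add_left : K.S (X + Y) Z = K.S X Z + K.S Y Z := by
  simp only [S, K.Rm_add_mid, K.g_add_left, Finset.sum_add_distrib]

theorem S_smul_left (a : C) : K.S (a • X) Y = a * K.S X Y := by
  simp only [S, K.Rm_smul_mid, K.g_smul_left, Finset.mul_sum]

/-- The Ricci tensor as a bundled `C`-bilinear form. -/
def ricciForm : LinearMap.BilinForm C (Derivation ℝ C C) :=
  LinearMap.mk₂ C K.S K.S_add_left (fun a X Y => K.S_smul_left X Y a)
    (fun X Y Z => by simp only [K.S_symm X, K.S_add_left])
    (fun a X Y => by simp only [K.S_symm X, K.S_smul_left, smul_eq_mul])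

theorem S_sub_left : K.S (X - Y) Z = K.S X Z - K.S Y Z := K.ricciForm.map_sub₂ X Y Z

theorem Q_sub : K.Q (X - Y) = K.Q X - K.Q Y := by
  simp only [Q, K.S_sub_left, sub_smul, Finset.sum_sub_distrib]

theorem Q_smul (a : C) : K.Q (a • X) = a • K.Q X := by
  simp only [Q, K.S_smul_left, mul_smul, Finset.smul_sum]

theorem g_Q : K.g (K.Q X) Y = K.S X Y := by
  refine Eq.trans ?_ (K.sum_g_frame_smul_map Y (K.ricciForm X))
  simp only [Q, K.g_sum_left, K.g_smul_left, K.g_symm (K.e _) Y, smul_eq_mul, mul_comm (K.S X _)]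
  rfl

theorem g_nablaQ : K.g (K.nablaQ X Y) Z = ∑ i, K.g (K.nablaRm X (K.e i) Y Z) (K.e i) := by
  have hframe (i j) : K.g (K.nabla X (K.e i)) (K.e j) = -K.g (K.e i) (K.nabla X (K.e j)) := by
    have hconst : X (K.g (K.e i) (K.e j)) = 0 := by
      rw [K.g_frame]
      split_ifs <;> simp
    rw [K.metric_compat] at hconst
    linear_combination hconst
  have hskew : ∑ i, K.g (K.Rm (K.nabla X (K.e i)) Y Z) (K.e i)
      = -∑ i, K.g (K.Rm (K.e i) Y Z) (K.nabla X (K.e i)) :=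
    K.sum_bilin_skew_frame (K.curvatureForm Y Z) hframe
  have hderiv : X (K.S Y Z) = ∑ i, (K.g (K.nabla X (K.Rm (K.e i) Y Z)) (K.e i)
      + K.g (K.Rm (K.e i) Y Z) (K.nabla X (K.e i))) := by
    simp only [S, map_sum, K.metric_compat]
  have hQ : K.g (K.nablaQ X Y) Z
      = X (K.S Y Z) - K.S (K.nabla X Y) Z - K.S Y (K.nabla X Z) := by
    rw [nablaQ, K.g_sub_left, K.g_Q, ← K.g_Q Y, K.metric_compat, K.g_Q Y]
    ring
  rw [hQ, hderiv]
  simp only [S, nablaRm, K.g_sub_left, Finset.sum_add_distrib, Finset.sum_sub_distrib, hskew]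
  ring

end Ricci

section Kenmotsu

theorem eta_smul_phi_xi : K.η X • K.φ K.ξ = K.η (K.φ X) • K.ξ := by
  have hcube := K.phi_phi (K.φ X)
  rw [K.phi_phi X, K.phi_add, K.phi_neg, K.phi_smul] at hcube
  exact add_left_cancel hcube

theorem phi_xi_eq_smul : K.φ K.ξ = K.η (K.φ K.ξ) • K.ξ := by
  simpa only [K.eta_xi, one_smul] using K.eta_smul_phi_xi K.ξ

theorem eta_phi_eq_mul : K.η (K.φ X) = K.η (K.φ K.ξ) * K.η X := by
  have h := congrArg K.η (K.eta_smul_phi_xi X)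
  rw [K.eta_smul, K.eta_smul, K.eta_xi] at h
  linear_combination -h

theorem eta_phi_xi_smul_phi_xi : K.η (K.φ K.ξ) • K.φ K.ξ = 0 := by
  rw [← K.phi_smul, ← K.phi_xi_eq_smul, K.phi_phi, K.eta_xi, one_smul, neg_add_cancel]

theorem eta_nabla_xi : K.η (K.nabla X K.ξ) = 0 := by
  have hunit := K.metric_compat X K.ξ K.ξ
  rw [K.g_xi_left, K.eta_xi, Derivation.map_one_eq_zero, K.g_xi_left, K.g_xi_right,
    ← two_mul] at hunit
  exact eq_zero_of_natCast_mul_eq_zero ℝ two_ne_zero (mod_cast hunit.symm)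

theorem nabla_phi : K.nabla X (K.φ Y)
    = K.φ (K.nabla X Y) + (K.g (K.φ X) Y • K.ξ - K.η Y • K.φ X) := by
  rw [← K.kenmotsu, add_sub_cancel]

-- The covariant derivative of `φ² = -1 + η ⊗ ξ`.
theorem eta_smul_nabla_xi : (X (K.η Y) - K.η (K.nabla X Y)) • K.ξ + K.η Y • K.nabla X K.ξ
    = (K.g X Y - 2 * (K.η X * K.η Y)) • K.ξ + K.η Y • X - K.η (K.φ Y) • K.φ X
      + K.g (K.φ X) Y • K.φ K.ξ := by
  have h := K.nabla_phi X (K.φ Y)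
  rw [K.phi_phi Y, K.nabla_phi X Y, K.nabla_add_right, K.nabla_neg_right, K.nabla_leibniz,
    K.phi_add, K.phi_phi, K.phi_sub, K.phi_smul, K.phi_smul, K.phi_phi, K.compat_phi] at h
  linear_combination (norm := module) (1 : C) • h

theorem nabla_xi_eq_sub_eta_phi_xi_smul :
    K.nabla X K.ξ = X - K.η X • K.ξ - K.η (K.φ K.ξ) • K.φ X := by
  have h := K.eta_smul_nabla_xi X K.ξ
  have hvanish : K.η (K.φ X) • K.φ K.ξ = 0 := by
    rw [eta_phi_eq_mul, mul_comm, mul_smul, K.eta_phi_xi_smul_phi_xi, smul_zero]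
  rw [K.eta_nabla_xi, K.eta_xi, Derivation.map_one_eq_zero, K.g_xi_right, K.g_xi_right,
    hvanish] at h
  linear_combination (norm := module) (1 : C) • h

theorem eta_phi_xi_smul_phi : K.η (K.φ K.ξ) • K.φ X = 0 := by
  refine K.g_ext fun Y => ?_
  have h := congrArg K.η (K.eta_smul_nabla_xi X Y)
  have hcompat := K.metric_compat X Y K.ξ
  rw [K.nabla_xi_eq_sub_eta_phi_xi_smul] at hcompat
  simp only [K.g_sub_right, K.g_smul_right, K.g_xi_right, K.g_symm Y] at hcompat
  simp only [K.eta_add, K.eta_sub, K.eta_smul, K.eta_xi, K.eta_nabla_xi, K.eta_phi_eq_mul X,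
    K.eta_phi_eq_mul Y] at h
  have hsq : K.η (K.φ K.ξ) * K.η (K.φ K.ξ) = 0 := by
    rw [← K.eta_smul, K.eta_phi_xi_smul_phi_xi, K.eta_def, K.g_zero_left]
  rw [K.g_smul_left, K.g_zero_left]
  refine eq_zero_of_natCast_mul_eq_zero ℝ two_ne_zero ?_
  push_cast
  linear_combination hcompat - h + K.η X * K.η Y * hsq

theorem nabla_xi : K.nabla X K.ξ = X - K.η X • K.ξ := by
  rw [nabla_xi_eq_sub_eta_phi_xi_smul, eta_phi_xi_smul_phi, sub_zero]

theorem apply_eta : X (K.η Y) = K.η (K.nabla X Y) + K.g X Y - K.η X * K.η Y := by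
  rw [K.eta_def Y, K.metric_compat, K.nabla_xi, K.g_sub_right, K.g_smul_right, K.g_xi_right,
    K.g_xi_right, K.g_symm Y X]
  ring

theorem Rm_xi_right : K.Rm X Y K.ξ = K.η X • Y - K.η Y • X := by
  simp only [Rm_eq_nabla, K.nabla_xi, K.nabla_sub_right, K.nabla_leibniz, K.apply_eta,
    K.g_symm Y X]
  module

theorem Rm_xi_left : K.Rm K.ξ X Y = K.η Y • X - K.g X Y • K.ξ := by
  refine K.g_ext fun Z => ?_
  rw [K.g_Rm_pair_symm, K.Rm_xi_right]
  simp only [K.g_sub_left, K.g_smul_left, K.g_xi_left, K.g_symm Y X, K.g_symm Z X]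
  ring

theorem nablaRm_xi_mid : K.nablaRm X K.ξ Y Z = K.g X Z • Y - K.g Y Z • X - K.Rm X Y Z := by
  simp only [nablaRm, K.Rm_xi_left, K.nabla_xi, K.Rm_sub_left, K.Rm_smul_left, K.nabla_sub_right,
    K.nabla_leibniz, K.apply_eta, K.metric_compat]
  module

theorem nablaRm_xi_left :
    K.nablaRm K.ξ X Y Z = (2 : C) • (K.g X Z • Y - K.g Y Z • X - K.Rm X Y Z) := by
  have bianchi := K.second_bianchi K.ξ X Y Z
  rw [K.nablaRm_swap X Y, K.nablaRm_xi_mid, K.nablaRm_xi_mid, K.Rm_swap Y X] at bianchi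
  linear_combination (norm := module) (1 : C) • bianchi

theorem Rm_phi : K.Rm X Y (K.φ Z) = K.φ (K.Rm X Y Z) + K.g Y Z • K.φ X
    - K.g X Z • K.φ Y - K.g (K.φ X) Z • Y + K.g (K.φ Y) Z • X := by
  simp only [Rm_eq_nabla, K.nabla_phi, K.nabla_add_right, K.nabla_sub_right, K.nabla_leibniz,
    K.phi_sub, K.metric_compat, K.apply_eta, K.nabla_xi, K.g_add_left, K.g_sub_left,
    K.g_smul_left, K.g_xi_left]
  module

theorem g_Rm_phi_phi : K.g (K.Rm X Y (K.φ Z)) (K.φ W) =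
    K.g (K.Rm X Y Z) W + K.g Y Z * K.g X W - K.g X Z * K.g Y W
      - K.g (K.φ X) Z * K.g Y (K.φ W) + K.g (K.φ Y) Z * K.g X (K.φ W) := by
  have heta : K.η (K.Rm X Y Z) = K.η Y * K.g X Z - K.η X * K.g Y Z := by
    rw [K.eta_def (K.Rm X Y Z), K.g_Rm_skew, K.Rm_xi_right, K.g_sub_left, K.g_smul_left,
      K.g_smul_left]
    ring
  rw [K.Rm_phi]
  simp only [K.g_add_left, K.g_sub_left, K.g_smul_left, K.compat_phi, heta]
  ring

theorem S_xi_right : K.S X K.ξ = -(2 * (n : C)) * K.η X := by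
  have hterm (i) : K.g (K.Rm (K.e i) X K.ξ) (K.e i)
      = K.g X (K.e i) * K.g (K.e i) K.ξ - K.η X * K.g (K.e i) (K.e i) := by
    rw [K.Rm_xi_right, K.g_sub_left, K.g_smul_left, K.g_smul_left, K.g_xi_right]
    ring
  simp only [S, hterm, Finset.sum_sub_distrib, ← Finset.mul_sum, K.sum_g_frame_mul_g_frame,
    K.sum_g_frame_frame]
  rw [K.g_xi_right]
  ring

theorem Q_xi : K.Q K.ξ = -(2 * (n : C)) • K.ξ :=
  K.g_ext fun X => by rw [K.g_Q, K.S_symm, K.S_xi_right, K.g_smul_left, K.g_xi_left]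

theorem nablaQ_xi_right : K.nablaQ X K.ξ = -K.Q X - (2 * (n : C)) • X := by
  have hconst : X (-(2 * (n : C))) = 0 := by simp [two_mul]
  rw [nablaQ, K.Q_xi, K.nabla_leibniz, hconst, K.nabla_xi, K.Q_sub, K.Q_smul, K.Q_xi]
  module

theorem nablaQ_xi_left : K.nablaQ K.ξ X = -(2 : C) • K.Q X - (4 * (n : C)) • X := by
  refine K.g_ext fun Y => ?_
  have hterm (i) : K.g (K.nablaRm K.ξ (K.e i) X Y) (K.e i)
      = 2 * (K.g Y (K.e i) * K.g (K.e i) X) - 2 * K.g X Y * K.g (K.e i) (K.e i)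
        - 2 * K.g (K.Rm (K.e i) X Y) (K.e i) := by
    simp only [K.nablaRm_xi_left, K.g_smul_left, K.g_sub_left, K.g_symm X (K.e i),
      K.g_symm Y (K.e i)]
    ring
  simp only [g_nablaQ, hterm, Finset.sum_sub_distrib, ← Finset.mul_sum,
    K.sum_g_frame_mul_g_frame, K.sum_g_frame_frame, K.g_sub_left, K.g_smul_left, K.g_Q, S,
    K.g_symm Y X]
  ring

end Kenmotsu

section StarRicci

theorem eta_phi_xi (hn : n ≠ 0) : K.η (K.φ K.ξ) = 0 := by
  have hproj (i) :
      K.η (K.φ K.ξ) * (K.g (K.e i) (K.e i) - K.g K.ξ (K.e i) * K.g (K.e i) K.ξ) = 0 := by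
    have h := congrArg (K.g · (K.φ (K.e i))) (K.eta_phi_xi_smul_phi (K.e i))
    simpa only [K.g_smul_left, K.compat_phi, K.g_zero_left, K.g_xi_left, K.g_xi_right] using h
  have htrace : ∑ i, K.η (K.φ K.ξ)
      * (K.g (K.e i) (K.e i) - K.g K.ξ (K.e i) * K.g (K.e i) K.ξ) = 0 :=
    Finset.sum_eq_zero fun i _ => hproj i
  rw [← Finset.mul_sum, Finset.sum_sub_distrib, K.sum_g_frame_frame, K.sum_g_frame_mul_g_frame,
    K.g_xi_left, K.eta_xi] at htrace
  refine eq_zero_of_natCast_mul_eq_zero ℝ (mul_ne_zero two_ne_zero hn) ?_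
  push_cast
  linear_combination htrace

theorem g_phi_left (hn : n ≠ 0) : K.g (K.φ X) Y = -K.g X (K.φ Y) := by
  have h := K.compat_phi (K.φ X) Y
  rw [K.phi_phi, K.g_add_left, K.g_neg_left, K.g_smul_left, K.g_xi_left, K.eta_phi_eq_mul X,
    K.eta_phi_eq_mul Y, K.eta_phi_xi hn] at h
  linear_combination -h

theorem g_phi_self (hn : n ≠ 0) : K.g X (K.φ X) = 0 := by
  have h := K.g_phi_left X X hn
  rw [K.g_symm] at h
  refine eq_zero_of_natCast_mul_eq_zero ℝ two_ne_zero ?_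
  push_cast
  linear_combination h

theorem sum_g_Rm_phi_phi (hn : n ≠ 0) :
    ∑ i, K.g (K.Rm (K.e i) X (K.φ Y)) (K.φ (K.e i))
      = K.S X Y + (2 * (n : C) - 1) * K.g X Y + K.η X * K.η Y := by
  have hterm (i) : K.g (K.Rm (K.e i) X (K.φ Y)) (K.φ (K.e i))
      = K.g (K.Rm (K.e i) X Y) (K.e i) + K.g X Y * K.g (K.e i) (K.e i)
        - K.g X (K.e i) * K.g (K.e i) Y - K.g (K.φ X) (K.e i) * K.g (K.e i) (K.φ Y) := by
    rw [K.g_Rm_phi_phi, K.g_phi_self _ hn, K.g_phi_left X (K.e i) hn,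
      K.g_phi_left (K.e i) Y hn]
    ring
  simp only [hterm, Finset.sum_sub_distrib, Finset.sum_add_distrib, ← Finset.mul_sum,
    K.sum_g_frame_mul_g_frame, K.sum_g_frame_frame, K.compat_phi]
  rw [S]
  ring

theorem sum_g_Rm_phi_frame (hn : n ≠ 0) :
    ∑ i, K.g (K.Rm X Y (K.φ (K.e i))) (K.e i)
      = 2 * ∑ i, K.g (K.Rm (K.e i) X Y) (K.φ (K.e i)) := by
  have hterm (i) : K.g (K.Rm X Y (K.φ (K.e i))) (K.e i)
      = K.g (K.Rm (K.e i) X Y) (K.φ (K.e i)) - K.g (K.Rm (K.φ (K.e i)) X Y) (K.e i) := by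
    have hpair : K.g (K.Rm Y (K.φ (K.e i)) X) (K.e i)
        = -K.g (K.Rm (K.e i) X Y) (K.φ (K.e i)) := by
      rw [K.g_Rm_pair_symm, K.Rm_swap, K.g_neg_left]
    linear_combination K.g_first_bianchi X Y (K.φ (K.e i)) (K.e i) - hpair
  have hskew : ∑ i, K.g (K.Rm (K.φ (K.e i)) X Y) (K.e i)
      = -∑ i, K.g (K.Rm (K.e i) X Y) (K.φ (K.e i)) :=
    K.sum_bilin_skew_frame (K.curvatureForm X Y) fun i j => K.g_phi_left _ _ hn
  simp only [hterm, Finset.sum_sub_distrib, hskew]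
  ring

theorem eta_smul_xi_of_dim_one (K : KenmotsuManifold 0 C) (X : Derivation ℝ C C) :
    K.η X • K.ξ = X := by
  have hspan (Y) : Y = K.g Y (K.e 0) • K.e 0 :=
    (K.frame_span Y).trans (Fin.sum_univ_one fun i => K.g Y (K.e i) • K.e i)
  have heta (Y) : K.η Y = K.g Y (K.e 0) * K.η (K.e 0) := by
    conv_lhs => rw [hspan Y, K.eta_smul]
  have hxi : K.g K.ξ (K.e 0) = K.η (K.e 0) := K.g_xi_left _
  have hunit : K.η (K.e 0) * K.η (K.e 0) = 1 := by rw [← K.eta_xi, heta K.ξ, hxi]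
  calc K.η X • K.ξ = (K.g X (K.e 0) * (K.η (K.e 0) * K.η (K.e 0))) • K.e 0 := by
        rw [hspan K.ξ, hxi, smul_smul, heta X, mul_assoc]
    _ = X := by rw [hunit, mul_one, ← hspan]

theorem Sstar_eq : K.Sstar X Y = K.S X Y + (2 * (n : C) - 1) * K.g X Y + K.η X * K.η Y := by
  rcases eq_or_ne n 0 with rfl | hn
  · have hflat (V W U) : K.Rm V W U = 0 := by
      rw [← K.eta_smul_xi_of_dim_one V, ← K.eta_smul_xi_of_dim_one W, K.Rm_smul_left,
        K.Rm_smul_mid, K.Rm_self, smul_zero, smul_zero]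
    have hg : K.g X Y = K.η X * K.η Y := by
      rw [← K.eta_smul_xi_of_dim_one X, K.g_smul_left, K.g_xi_left, K.eta_smul, K.eta_xi, mul_one]
    simp [Sstar, S, hflat, K.g_zero_left, hg]
  · rw [Sstar, K.sum_g_Rm_phi_frame _ _ hn, K.sum_g_Rm_phi_phi _ _ hn, two_mul, ← two_smul ℝ,
      inv_smul_smul₀ two_ne_zero]

end StarRicci

namespace IsGradAlmostStarRicciSoliton

variable {K} {f l : C} {F : Derivation ℝ C C}

theorem nabla_grad (h : K.IsGradAlmostStarRicciSoliton f F l) (X : Derivation ℝ C C) :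
    K.nabla X F = -(K.Q X + (2 * (n : C) - 1 + l) • X + K.η X • K.ξ) := by
  refine K.g_ext fun Y => ?_
  have hHess := h.2 X Y
  rw [K.Sstar_eq] at hHess
  simp only [K.g_neg_left, K.g_add_left, K.g_smul_left, K.g_Q, K.g_xi_left]
  linear_combination hHess

theorem Rm_grad (h : K.IsGradAlmostStarRicciSoliton f F l) (X Y : Derivation ℝ C C) :
    K.Rm X Y F = K.nablaQ Y X - K.nablaQ X Y + Y l • X - X l • Y + K.η X • Y - K.η Y • X := by
  have hconst (V : Derivation ℝ C C) : V (2 * (n : C) - 1 + l) = V l := by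
    simp [two_mul]
  simp only [Rm_eq_nabla, h.nabla_grad, K.nabla_neg_right, K.nabla_add_right, K.nabla_leibniz,
    K.nabla_xi, K.apply_eta, hconst, nablaQ, K.g_symm Y X]
  module

theorem Q_eq (h : K.IsGradAlmostStarRicciSoliton f F l) (X : Derivation ℝ C C) :
    K.Q X = (K.ξ (f + l) - (2 * n + 1)) • X + K.η X • K.ξ - X (f + l) • K.ξ := by
  have hR := h.Rm_grad K.ξ X
  have heta : K.η F = K.ξ f := by rw [K.eta_def, h.1]
  rw [K.Rm_xi_left, K.nablaQ_xi_right, K.nablaQ_xi_left, heta, K.g_symm, h.1, K.eta_xi] at hR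
  rw [map_add, map_add]
  linear_combination (norm := module) (-1 : C) • hR

theorem apply_add_eq (h : K.IsGradAlmostStarRicciSoliton f F l) (X : Derivation ℝ C C) :
    X (f + l) = K.η X * K.ξ (f + l) := by
  have hQ := congrArg K.η (h.Q_eq X)
  rw [K.eta_def (K.Q X), K.g_Q, K.S_xi_right, K.eta_sub, K.eta_add] at hQ
  simp only [K.eta_smul, K.eta_xi] at hQ
  linear_combination hQ

end IsGradAlmostStarRicciSoliton

end KenmotsuManifold

open KenmotsuManifold in
/-- If the metric of a Kenmotsu manifold of dimension `2n+1` is a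
gradient almost `*`-Ricci soliton, then
`S(X,Z) = (ξ(f+λ) - 2n - 1) g(X,Z) + (1 - ξ(f+λ)) η(X)η(Z)`,
i.e. the manifold is `η`-Einstein. -/
theorem stmt14 {n : ℕ} {C : Type*} [CommRing C] [Algebra ℝ C]
    (K : KenmotsuManifold n C) (f l : C) (F : Derivation ℝ C C)
    (h : K.IsGradAlmostStarRicciSoliton f F l) (X Z : Derivation ℝ C C) :
    K.S X Z = (K.ξ (f + l) - algebraMap ℝ C (2 * n + 1)) * K.g X Z
      + (1 - K.ξ (f + l)) * (K.η X * K.η Z) := by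
  have hconst : algebraMap ℝ C (2 * n + 1) = 2 * (n : C) + 1 :=
    mod_cast map_natCast (algebraMap ℝ C) (2 * n + 1)
  rw [← K.g_Q, h.Q_eq, h.apply_add_eq X, hconst]
  simp only [K.g_add_left, K.g_sub_left, K.g_smul_left, K.g_xi_left]
  ring
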